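/- (Equilibrium Characterization, supply at capacity) Let E>0, g_l>0, n ≥ 1, and P_{0,i} ≥ 0 with Σᵢ P_{0,i} = E²·g_l/4. Then there exists exactly one g* ∈ ℝⁿ_{≥0} satisfying v(g*)²·g*ᵢ = P_{0,i} for all i, where v(g) = E·g_l/(Σⱼ gⱼ + g_l); it is given by g*ᵢ = 4·P_{0,i}/E², it satisfies Σᵢ g*ᵢ = g_l, and the equilibrium voltage is v(g*) = E/2. -/

import Mathlib

/-!
Summing the equilibrium equations shows that an equilibrium with total conductance `S` delivers
the power `v ^ 2 * S = ∑ i, P i`. The shortfall of this power from the capacity `E ^ 2 * gl / 4`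
is a multiple of the perfect square `(S - gl) ^ 2`, so demand at capacity forces impedance matching
`S = gl`. The voltage is then `E / 2`, and the equilibrium equations become linear in `g`.
-/

section StarNetwork

variable {K ι : Type*} [Field K] [Fintype ι] {E gl : K} {P g : ι → K}

/-- The load voltage `v(g)` of a star network with source voltage `E`, line conductance `gl` and
load conductances `g`. It has the junk value `0` where the total conductance `∑ i, g i + gl`
vanishes. -/
def loadVoltage (E gl : K) (g : ι → K) : K :=
  E * gl / ((∑ i, g i) + gl)

/-- The load conductances `g` are an equilibrium of the inflexible-load dynamics with nominal
demands `P`: every load draws exactly its demand. Signs of the conductances are not part of the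
definition, so that it makes sense over a field without an order. -/
def IsLoadEquilibrium (E gl : K) (P g : ι → K) : Prop :=
  ∀ i, loadVoltage E gl g ^ 2 * g i = P i

theorem IsLoadEquilibrium.loadVoltage_sq_mul_sum (h : IsLoadEquilibrium E gl P g) :
    loadVoltage E gl g ^ 2 * ∑ i, g i = ∑ i, P i := by
  rw [Finset.mul_sum]
  exact Finset.sum_congr rfl fun i _ => h i

theorem loadVoltage_of_sum_eq (hgl : gl ≠ 0) (hsum : ∑ i, g i = gl) :
    loadVoltage E gl g = E / 2 := by
  rw [loadVoltage, hsum, ← two_mul, mul_div_mul_right E 2 hgl]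

theorem sq_mul_sub_four_mul_loadVoltage_sq_mul_sum (hg : (∑ i, g i) + gl ≠ 0) :
    E ^ 2 * gl - 4 * (loadVoltage E gl g ^ 2 * ∑ i, g i) =
      E ^ 2 * gl * (((∑ i, g i) - gl) / ((∑ i, g i) + gl)) ^ 2 := by
  rw [loadVoltage]
  field_simp
  ring

variable [NeZero (4 : K)]

theorem sum_eq_of_loadVoltage_sq_mul_sum_eq (hE : E ≠ 0) (hgl : gl ≠ 0)
    (hg : (∑ i, g i) + gl ≠ 0)
    (hpower : loadVoltage E gl g ^ 2 * ∑ i, g i = E ^ 2 * gl / 4) :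
    ∑ i, g i = gl := by
  have hsq : E ^ 2 * gl * (((∑ i, g i) - gl) / ((∑ i, g i) + gl)) ^ 2 = 0 := by
    rw [← sq_mul_sub_four_mul_loadVoltage_sq_mul_sum hg, hpower,
      mul_div_cancel₀ _ four_ne_zero, sub_self]
  simpa [hE, hgl, hg, sub_eq_zero] using hsq

theorem isLoadEquilibrium_iff_of_sum_eq (hE : E ≠ 0) (hgl : gl ≠ 0) (hsum : ∑ i, g i = gl) :
    IsLoadEquilibrium E gl P g ↔ ∀ i, g i = 4 * P i / E ^ 2 := by
  refine forall_congr' fun i => ?_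
  have two_sq : (2 : K) ^ 2 = 4 := by norm_num
  rw [loadVoltage_of_sum_eq hgl hsum, div_pow, two_sq, div_mul_eq_mul_div,
    div_eq_iff four_ne_zero, eq_div_iff (pow_ne_zero 2 hE), mul_comm (E ^ 2), mul_comm (P i)]

theorem sum_four_mul_div_sq_eq (hE : E ≠ 0) (hcap : ∑ i, P i = E ^ 2 * gl / 4) :
    ∑ i, 4 * P i / E ^ 2 = gl := by
  rw [← Finset.sum_div, ← Finset.mul_sum, hcap,
    mul_div_cancel₀ _ four_ne_zero, mul_div_cancel_left₀ gl (pow_ne_zero 2 hE)]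

theorem stmt_5_general (hE : E ≠ 0) (hgl : gl ≠ 0) (hcap : ∑ i, P i = E ^ 2 * gl / 4) :
    (∑ i, 4 * P i / E ^ 2) = gl ∧
    loadVoltage E gl (fun i => 4 * P i / E ^ 2) = E / 2 ∧
    IsLoadEquilibrium E gl P (fun i => 4 * P i / E ^ 2) ∧
    ∀ g : ι → K, (∑ i, g i) + gl ≠ 0 → IsLoadEquilibrium E gl P g →
      ∀ i, g i = 4 * P i / E ^ 2 := by
  have hsum := sum_four_mul_div_sq_eq hE hcap
  refine ⟨hsum, loadVoltage_of_sum_eq hgl hsum,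
    (isLoadEquilibrium_iff_of_sum_eq hE hgl hsum).mpr fun _ => rfl, fun g hg heq => ?_⟩
  have hmatched : ∑ i, g i = gl :=
    sum_eq_of_loadVoltage_sq_mul_sum_eq hE hgl hg (heq.loadVoltage_sq_mul_sum.trans hcap)
  exact (isLoadEquilibrium_iff_of_sum_eq hE hgl hmatched).mp heq

end StarNetwork

/-- Equilibrium characterization at capacity: when `Σᵢ P₀ᵢ = E²·g_l/4`, the unique nonnegative
equilibrium of the inflexible-load dynamics is `g*ᵢ = 4·P₀ᵢ/E²`; it satisfies `Σᵢ g*ᵢ = g_l`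
and the equilibrium voltage is `E/2`. -/
theorem stmt_5 (E gl : ℝ) (hE : 0 < E) (hgl : 0 < gl) (n : ℕ) (hn : 1 ≤ n)
    (P0 : Fin n → ℝ) (hP0 : ∀ i, 0 ≤ P0 i)
    (hcap : ∑ i, P0 i = E ^ 2 * gl / 4) :
    (∀ i, 0 ≤ 4 * P0 i / E ^ 2) ∧
    (∑ i, 4 * P0 i / E ^ 2) = gl ∧
    E * gl / ((∑ i, 4 * P0 i / E ^ 2) + gl) = E / 2 ∧
    (∀ i, (E * gl / ((∑ j, 4 * P0 j / E ^ 2) + gl)) ^ 2 * (4 * P0 i / E ^ 2) = P0 i) ∧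
    (∀ g : Fin n → ℝ, (∀ i, 0 ≤ g i) →
      (∀ i, (E * gl / ((∑ j, g j) + gl)) ^ 2 * g i = P0 i) →
      ∀ i, g i = 4 * P0 i / E ^ 2) := by
  obtain ⟨hsum, hvoltage, heq, hunique⟩ := stmt_5_general hE.ne' hgl.ne' hcap
  exact ⟨fun i => div_nonneg (mul_nonneg zero_le_four (hP0 i)) (sq_nonneg E), hsum, hvoltage, heq,
    fun g hg => hunique g (add_pos_of_nonneg_of_pos (Fintype.sum_nonneg hg) hgl).ne'⟩
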